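/- For any vertex v of a directed median graph (G,o), the principal filter F_o(v,G) is a convex set of vertices of G. -/

import Mathlib

/-- The interval `I(u,v)` in a graph. -/
def gInterval {V : Type} (G : SimpleGraph V) (u v : V) : Set V :=
  {w | G.dist u w + G.dist w v = G.dist u v}

/-- A median graph: a connected graph in which every triple of vertices has a
unique median. -/
def IsMedianGraph {V : Type} (G : SimpleGraph V) : Prop :=
  G.Connected ∧ ∀ x y z : V, ∃! m : V,
    m ∈ gInterval G x y ∧ m ∈ gInterval G y z ∧ m ∈ gInterval G z x

/-- A set of vertices is convex if it contains the interval between any two of its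
elements. -/
def ConvexSet {V : Type} (G : SimpleGraph V) (S : Set V) : Prop :=
  ∀ u ∈ S, ∀ v ∈ S, gInterval G u v ⊆ S

/-- An orientation of the edges of a graph: each edge gets exactly one direction. -/
structure GraphOrientation {V : Type} (G : SimpleGraph V) where
  dir : V → V → Prop
  adj_of_dir : ∀ u v, dir u v → G.Adj u v
  total : ∀ u v, G.Adj u v → dir u v ∨ dir v u
  asymm : ∀ u v, dir u v → ¬ dir v u

/-- An orientation is admissible (defines a directed median graph) if opposite
edges of every 4-cycle receive the same direction. -/
def IsAdmissible {V : Type} (G : SimpleGraph V) (o : GraphOrientation G) : Prop :=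
  ∀ a b c d : V, G.Adj a b → G.Adj b c → G.Adj c d → G.Adj d a → a ≠ c → b ≠ d →
    (o.dir a b ↔ o.dir d c)

/-- The principal filter `F_o(v,G) = {x : v = x or v ≺_o x}` of a vertex `v`,
where `≺_o` is the partial order generated by the directed edges. -/
def oFilter {V : Type} {G : SimpleGraph V} (o : GraphOrientation G) (v : V) : Set V :=
  {x | Relation.ReflTransGen o.dir v x}

/-!
The argument goes from local to global. In a modular graph, distances to a fixed vertex `u` differ
by exactly one along every edge, and two neighbours of `z` that are closer to `u` than `z` have a
common neighbour that is closer still (the quadrangle condition). Sliding quadrangles along a path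
inside a connected set `S` shows that `S` is convex as soon as it contains the common neighbours of
any two of its vertices at distance two.

For the principal filter `F(v)`, quadrangles and the orientation of 4-cycles show that every
neighbour of `x ∈ F(v)` closer to `v` than `x` lies in `F(v)` and points to `x`. Now let `w` be a
common neighbour of `x, y ∈ F(v)`. If `w` is closer to `v` than `x`, it lies in `F(v)`. Otherwise
`x` and `y` have a common neighbour `z` closer to `v`, so `z → x`, hence `y → w` in the 4-cycle
`z, x, w, y`, and again `w ∈ F(v)`.
-/

/-- A modular graph: a connected graph in which every triple of vertices has at least one median.
The local-to-global principle for convexity is developed for these graphs. -/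
def IsModularGraph {V : Type} (G : SimpleGraph V) : Prop :=
  G.Connected ∧ ∀ x y z : V, (gInterval G x y ∩ gInterval G y z ∩ gInterval G z x).Nonempty

/-- A locally convex set of vertices: it contains the interval between any two of its elements at
distance two, written here in terms of common neighbours. It is the local condition from which
convexity of connected sets is deduced. -/
def IsLocallyConvex {V : Type} (G : SimpleGraph V) (S : Set V) : Prop :=
  ∀ x ∈ S, ∀ y ∈ S, G.dist x y = 2 → ∀ w, G.Adj x w → G.Adj w y → w ∈ S

section Interval

variable {V : Type} {G : SimpleGraph V} {a b c w : V}

theorem mem_gInterval : w ∈ gInterval G a b ↔ G.dist a w + G.dist w b = G.dist a b :=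
  Iff.rfl

theorem left_mem_gInterval : a ∈ gInterval G a b := by
  rw [mem_gInterval, SimpleGraph.dist_self, zero_add]

theorem mem_gInterval_iff_of_adj (hac : G.Adj a c) :
    c ∈ gInterval G a b ↔ G.dist c b + 1 = G.dist a b := by
  rw [mem_gInterval, SimpleGraph.dist_eq_one_iff_adj.2 hac, add_comm]

theorem gInterval_self (hG : G.Connected) : gInterval G a a = {a} := by
  ext w
  rw [mem_gInterval, SimpleGraph.dist_self, Nat.add_eq_zero_iff, hG.dist_eq_zero_iff,
    hG.dist_eq_zero_iff, Set.mem_singleton_iff, eq_comm, and_self_iff]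

theorem gInterval_subset_of_mem (hG : G.Connected) (hc : c ∈ gInterval G a b) :
    gInterval G c b ⊆ gInterval G a b := by
  intro w hw
  rw [mem_gInterval] at hc hw ⊢
  have hacw : G.dist a w ≤ G.dist a c + G.dist c w := hG.dist_triangle
  have hawb : G.dist a b ≤ G.dist a w + G.dist w b := hG.dist_triangle
  lia

theorem mem_gInterval_and_mem_of_mem_left (hG : G.Connected) (hw : w ∈ gInterval G a b)
    (hc : c ∈ gInterval G a w) : c ∈ gInterval G a b ∧ w ∈ gInterval G c b := by
  rw [mem_gInterval] at hw hc
  rw [mem_gInterval, mem_gInterval]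
  have hcwb : G.dist c b ≤ G.dist c w + G.dist w b := hG.dist_triangle
  have hacb : G.dist a b ≤ G.dist a c + G.dist c b := hG.dist_triangle
  lia

theorem exists_adj_mem_gInterval (hG : G.Connected) (hab : a ≠ b) :
    ∃ c, G.Adj a c ∧ c ∈ gInterval G a b := by
  obtain ⟨p, hp⟩ := hG.exists_walk_length_eq_dist a b
  cases p with
  | nil => exact absurd rfl hab
  | @cons _ c _ hac q =>
    refine ⟨c, hac, (mem_gInterval_iff_of_adj hac).2 ?_⟩
    have hcb : G.dist c b ≤ q.length := SimpleGraph.dist_le q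
    have hacb : G.dist a b ≤ G.dist a c + G.dist c b := hG.dist_triangle
    rw [SimpleGraph.dist_eq_one_iff_adj.2 hac] at hacb
    rw [SimpleGraph.Walk.length_cons] at hp
    lia

theorem gInterval_subset_of_forall_adj {S : Set V} (hG : G.Connected) (ha : a ∈ S)
    (h : ∀ c, G.Adj a c → c ∈ gInterval G a b → gInterval G c b ⊆ S) :
    gInterval G a b ⊆ S := by
  intro w hw
  obtain rfl | haw := eq_or_ne a w
  · exact ha
  obtain ⟨c, hac, hc⟩ := exists_adj_mem_gInterval hG haw
  obtain ⟨hcab, hwcb⟩ := mem_gInterval_and_mem_of_mem_left hG hw hc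
  exact h c hac hcab hwcb

end Interval

theorem IsMedianGraph.isModularGraph {V : Type} {G : SimpleGraph V} (hG : IsMedianGraph G) :
    IsModularGraph G := by
  refine ⟨hG.1, fun x y z => ?_⟩
  obtain ⟨m, ⟨hxy, hyz, hzx⟩, -⟩ := hG.2 x y z
  exact ⟨m, ⟨hxy, hyz⟩, hzx⟩

namespace IsModularGraph

variable {V : Type} {G : SimpleGraph V} {S : Set V} {a b d u x y z : V}

theorem exists_median (hG : IsModularGraph G) (x y u : V) :
    ∃ m, G.dist x m + G.dist y m = G.dist x y ∧ G.dist x m + G.dist m u = G.dist x u ∧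
      G.dist y m + G.dist m u = G.dist y u := by
  obtain ⟨m, ⟨hxy, hyu⟩, hux⟩ := hG.2 x y u
  rw [mem_gInterval] at hxy hyu hux
  refine ⟨m, ?_, ?_, hyu⟩
  · rw [G.dist_comm (u := y), hxy]
  · rw [G.dist_comm (u := x) (v := m), G.dist_comm (u := m) (v := u), add_comm, hux, G.dist_comm]

theorem dist_eq_dist_add_one_or_of_adj (hG : IsModularGraph G) (u : V) (hxy : G.Adj x y) :
    G.dist x u = G.dist y u + 1 ∨ G.dist y u = G.dist x u + 1 := by
  obtain ⟨m, hm_xy, hm_xu, hm_yu⟩ := hG.exists_median x y u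
  rw [SimpleGraph.dist_eq_one_iff_adj.2 hxy] at hm_xy
  lia

theorem quadrangle_condition (hG : IsModularGraph G) (hzx : G.Adj z x) (hzy : G.Adj z y)
    (hxy : x ≠ y) (hxu : G.dist x u + 1 = G.dist z u) (hyu : G.dist y u + 1 = G.dist z u) :
    ∃ w, G.Adj x w ∧ G.Adj y w ∧ G.dist w u + 1 = G.dist x u := by
  obtain ⟨m, hm_xy, hm_xu, hm_yu⟩ := hG.exists_median x y u
  have hxy_pos : 0 < G.dist x y := hG.1.pos_dist_of_ne hxy
  have hxy_le : G.dist x y ≤ G.dist x z + G.dist z y := hG.1.dist_triangle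
  rw [SimpleGraph.dist_eq_one_iff_adj.2 hzx.symm, SimpleGraph.dist_eq_one_iff_adj.2 hzy] at hxy_le
  have hxm : G.dist x m = 1 := by lia
  have hym : G.dist y m = 1 := by lia
  exact ⟨m, SimpleGraph.dist_eq_one_iff_adj.1 hxm, SimpleGraph.dist_eq_one_iff_adj.1 hym, by lia⟩

-- If `c` is another neighbour of `a` closer to `b`, the quadrangle `a, d, w, c` puts `c` into `S`
-- and passes the hypotheses on `a, d` to `c, w`, one step closer to `b`.
theorem gInterval_subset_of_adj_of_mem (hG : IsModularGraph G) (hS : IsLocallyConvex G S)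
    (ha : a ∈ S) (had : G.Adj a d) (hd : d ∈ gInterval G a b)
    (hdS : gInterval G d b ⊆ S) : gInterval G a b ⊆ S := by
  induction hn : G.dist a b using Nat.strong_induction_on generalizing a d with
  | _ n ih =>
  refine gInterval_subset_of_forall_adj hG.1 ha fun c hac hc => ?_
  obtain rfl | hne := eq_or_ne d c
  · exact hdS
  rw [mem_gInterval_iff_of_adj had] at hd
  rw [mem_gInterval_iff_of_adj hac] at hc
  obtain ⟨w, hdw, hcw, hwb⟩ := hG.quadrangle_condition had hac hne hd hc
  have hwS : gInterval G w b ⊆ S :=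
    (gInterval_subset_of_mem hG.1 ((mem_gInterval_iff_of_adj hdw).2 hwb)).trans hdS
  have haw : G.dist a w = 2 := by
    have hacw : G.dist a w ≤ G.dist a c + G.dist c w := hG.1.dist_triangle
    have hawb : G.dist a b ≤ G.dist a w + G.dist w b := hG.1.dist_triangle
    rw [SimpleGraph.dist_eq_one_iff_adj.2 hac, SimpleGraph.dist_eq_one_iff_adj.2 hcw] at hacw
    lia
  have hcS : c ∈ S := hS a ha w (hwS left_mem_gInterval) haw c hac hcw
  exact ih (G.dist c b) (by lia) hcS hcw ((mem_gInterval_iff_of_adj hcw).2 (by lia)) hwS rfl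

theorem gInterval_subset_of_adj (hG : IsModularGraph G) (hS : IsLocallyConvex G S)
    (ha : a ∈ S) (had : G.Adj a d) (hdS : gInterval G d b ⊆ S) : gInterval G a b ⊆ S := by
  rcases hG.dist_eq_dist_add_one_or_of_adj b had with hcloser | hfarther
  · exact hG.gInterval_subset_of_adj_of_mem hS ha had
      ((mem_gInterval_iff_of_adj had).2 hcloser.symm) hdS
  · exact (gInterval_subset_of_mem hG.1
      ((mem_gInterval_iff_of_adj had.symm).2 hfarther.symm)).trans hdS

theorem convexSet_of_isLocallyConvex (hG : IsModularGraph G) (hS : IsLocallyConvex G S)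
    (hconn : (G.induce S).Preconnected) : ConvexSet G S := by
  intro a ha b hb
  have hreach := hconn ⟨a, ha⟩ ⟨b, hb⟩
  rw [SimpleGraph.reachable_iff_reflTransGen] at hreach
  suffices ∀ c : S, Relation.ReflTransGen (G.induce S).Adj c ⟨b, hb⟩ → gInterval G c b ⊆ S from
    this ⟨a, ha⟩ hreach
  intro c hcb
  induction hcb using Relation.ReflTransGen.head_induction_on with
  | refl =>
    rw [gInterval_self hG.1]
    exact Set.singleton_subset_iff.2 hb
  | head hcd _ ih => exact hG.gInterval_subset_of_adj hS (Subtype.prop _) hcd ih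

end IsModularGraph

section Filter

variable {V : Type} {G : SimpleGraph V} {o : GraphOrientation G} {v x z : V}

theorem induce_oFilter_preconnected (o : GraphOrientation G) (v : V) :
    (G.induce (oFilter o v)).Preconnected := by
  have hreach : ∀ x (hx : x ∈ oFilter o v),
      (G.induce (oFilter o v)).Reachable ⟨v, Relation.ReflTransGen.refl⟩ ⟨x, hx⟩ := by
    intro x hx
    induction hx with
    | refl => exact SimpleGraph.Reachable.refl _
    | tail hvy hyx ih => exact ih.trans (SimpleGraph.Adj.reachable (o.adj_of_dir _ _ hyx))
  exact fun x y => (hreach x x.2).symm.trans (hreach y y.2)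

theorem mem_oFilter_and_dir_of_adj_of_dist_add_one_eq (hG : IsModularGraph G)
    (ho : IsAdmissible G o) (hx : x ∈ oFilter o v) (hxz : G.Adj x z)
    (hzv : G.dist z v + 1 = G.dist x v) : z ∈ oFilter o v ∧ o.dir z x := by
  induction hx generalizing z with
  | refl => simp at hzv
  | @tail y x hvy hyx ih =>
    obtain rfl | hyz := eq_or_ne y z
    · exact ⟨hvy, hyx⟩
    have hadj : G.Adj y x := o.adj_of_dir y x hyx
    have hyv : G.dist y v + 1 = G.dist x v := by
      rcases hG.dist_eq_dist_add_one_or_of_adj v hadj with hfarther | hcloser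
      · exact absurd (ih hadj hfarther.symm).2 (o.asymm y x hyx)
      · exact hcloser.symm
    obtain ⟨w, hyw, hzw, hwv⟩ := hG.quadrangle_condition hadj.symm hxz hyz hyv hzv
    obtain ⟨hw, hwy⟩ := ih hyw hwv
    have hxw : x ≠ w := by rintro rfl; lia
    have hwz : o.dir w z := (ho y x z w hadj hxz hzw hyw.symm hyz hxw).1 hyx
    have hzx : o.dir z x := (ho w y x z hyw.symm hadj hxz hzw hxw.symm hyz).1 hwy
    exact ⟨hw.tail hwz, hzx⟩

theorem oFilter_isLocallyConvex (hG : IsModularGraph G) (ho : IsAdmissible G o) (v : V) :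
    IsLocallyConvex G (oFilter o v) := by
  intro x hx y hy hdist w hxw hwy
  have hxy : x ≠ y := by rintro rfl; simp at hdist
  rcases hG.dist_eq_dist_add_one_or_of_adj v hxw with hwx | hxv
  · exact (mem_oFilter_and_dir_of_adj_of_dist_add_one_eq hG ho hx hxw hwx.symm).1
  rcases hG.dist_eq_dist_add_one_or_of_adj v hwy with hyv | hyw
  · obtain ⟨z, hxz, hyz, hzv⟩ :=
      hG.quadrangle_condition hxw.symm hwy hxy hxv.symm hyv.symm
    have hzx : o.dir z x := (mem_oFilter_and_dir_of_adj_of_dist_add_one_eq hG ho hx hxz hzv).2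
    have hzw : z ≠ w := by rintro rfl; lia
    have hyw : o.dir y w := (ho z x w y hxz.symm hxw hwy hyz hzw hxy).1 hzx
    exact Relation.ReflTransGen.tail hy hyw
  · exact (mem_oFilter_and_dir_of_adj_of_dist_add_one_eq hG ho hy hwy.symm hyw.symm).1

end Filter

theorem oFilter_convex_general {V : Type} {G : SimpleGraph V} (hG : IsModularGraph G)
    {o : GraphOrientation G} (ho : IsAdmissible G o) (v : V) : ConvexSet G (oFilter o v) :=
  hG.convexSet_of_isLocallyConvex (oFilter_isLocallyConvex hG ho v)
    (induce_oFilter_preconnected o v)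

/-- For any vertex `v` of a directed median graph `(G,o)`, the principal filter
`F_o(v,G)` is convex. -/
theorem oFilter_convex {V : Type} (G : SimpleGraph V) (hG : IsMedianGraph G)
    (o : GraphOrientation G) (ho : IsAdmissible G o) (v : V) :
    ConvexSet G (oFilter o v) := by
  exact oFilter_convex_general hG.isModularGraph ho v
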